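/- For data vectors v over Σ of sufficiently large order, v is the Parikh image of some anti-cycle if and only if v is non-degenerate. -/

import Mathlib

/-- Atoms: a countably infinite set. -/
abbrev Atom := ℕ

/-- Letters of the alphabet Σ: pairs (a, {b,c}) with b ≠ c and a ∉ {b,c}. -/
abbrev Letter := {p : Atom × Finset Atom // p.2.card = 2 ∧ p.1 ∉ p.2}

def Letter.src (α : Letter) : Atom := α.1.1

def Letter.trg (α : Letter) : Finset Atom := α.1.2

open Letter

/-- The set of sources of letters appearing in a finite multiset `v` over Σ. -/
def srcs (v : Letter →₀ ℕ) : Finset Atom := v.support.image Letter.src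

/-- Edges of the source graph `G(v)`: `(d,e)` is an edge iff `d,e` are distinct
vertices and some letter in `v` has source `d` and target not containing `e`. -/
def Edge (v : Letter →₀ ℕ) (d e : Atom) : Prop :=
  d ≠ e ∧ d ∈ srcs v ∧ e ∈ srcs v ∧ ∃ α ∈ v.support, src α = d ∧ e ∉ trg α


/-- Anti-paths: nonempty words over Σ such that the source of each letter does
not belong to the target of the preceding letter. -/
def IsAntiPath (w : List Letter) : Prop :=
  w ≠ [] ∧ w.Chain' (fun α β => src β ∉ trg α)

/-- Anti-cycles: anti-paths whose first source does not belong to the last target. -/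
def IsAntiCycle (w : List Letter) : Prop :=
  IsAntiPath w ∧ ∀ h : w ≠ [], src (w.head h) ∉ trg (w.getLast h)

/-- In-neighbourhood of a vertex in the source graph. -/
def inn (v : Letter →₀ ℕ) (e : Atom) : Set Atom := {d : Atom | Edge v d e}

/-- Letters of `v` that can precede a `d`-sourced letter (and have source ≠ d). -/
def precSet (v : Letter →₀ ℕ) (d : Atom) : Set Letter :=
  {α : Letter | α ∈ v.support ∧ src α ≠ d ∧ d ∉ trg α}

open Classical in
/-- Total multiplicity in `v` of the letters belonging to a set `P`. -/
noncomputable def mass (v : Letter →₀ ℕ) (P : Set Letter) : ℕ :=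
  ∑ α ∈ v.support, if α ∈ P then v α else 0

/-- Non-degeneracy of a data vector `v` over Σ:
(1) every vertex of the source graph has an in-neighbour;
(2) for distinct sources d,e the union of in-neighbourhoods is not contained in {d,e};
(3) for distinct sources d,e the total multiplicity of letters that can precede
a d- or e-sourced letter is at least 2. -/
def NonDeg (v : Letter →₀ ℕ) : Prop :=
  (∀ e ∈ srcs v, (inn v e).Nonempty) ∧
  (∀ d ∈ srcs v, ∀ e ∈ srcs v, d ≠ e → ¬ (inn v d ∪ inn v e ⊆ {d, e})) ∧
  (∀ d ∈ srcs v, ∀ e ∈ srcs v, d ≠ e → 2 ≤ mass v (precSet v d ∪ precSet v e))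

/-!
Anti-cycles are cyclic words, so they may be rotated freely.

*Necessity.* Cyclically, an anti-cycle must enter any proper set of its sources from outside; for
`{e}` and `{d, e}` this yields (1) and (2). For (3), rotate the word so that it starts where `d` is
entered: its last letter enters `d`, and the letter entering `e` occurs earlier.

*Sufficiency.* Pick one letter per source. Each of them forbids only two successors, so many of
them are pairwise compatible, and such a core is an anti-cycle in any order. By double counting, all
but at most two sources `d`, `e` are avoided by many targets in the core, and non-degeneracy lets
`d` and `e` be reached by short anti-paths that start at other sources. An anti-path `P` can be
inserted into an anti-cycle as soon as the letters that may precede `P` outnumber those that may not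
follow it, by a cyclic pigeonhole argument. This inserts everything until all sources are present,
and then any remaining letter fits just before a letter with the same source.
-/

section CyclicChain

variable {α : Type*} {r : α → α → Prop}

lemma cycle_chain_iff {l : List α} (hl : l ≠ []) :
    Cycle.Chain r (l : Cycle α) ↔ r (l.getLast hl) (l.head hl) ∧ l.IsChain r := by
  rw [Cycle.chain_ne_nil r hl, List.isChain_cons, List.head?_eq_some_head hl]
  simp only [Option.mem_some_iff, forall_eq']

lemma cycle_chain_append_iff {l₁ l₂ : List α} (h₁ : l₁ ≠ []) (h₂ : l₂ ≠ []) :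
    Cycle.Chain r ((l₁ ++ l₂ : List α) : Cycle α) ↔
      (l₁.IsChain r ∧ r (l₁.getLast h₁) (l₂.head h₂)) ∧
        l₂.IsChain r ∧ r (l₂.getLast h₂) (l₁.head h₁) := by
  rw [cycle_chain_iff (List.append_ne_nil_of_left_ne_nil h₁ l₂), List.isChain_append,
    List.getLast_append_of_ne_nil _ h₂, List.head_append_of_ne_nil h₁,
    List.getLast?_eq_some_getLast h₁, List.head?_eq_some_head h₂]
  simp only [Option.mem_some_iff, forall_eq']
  tauto

lemma exists_eq_append_of_not_isChain {l : List α} (h : ¬ l.IsChain r) :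
    ∃ l₁ x y l₂, l = l₁ ++ x :: y :: l₂ ∧ ¬ r x y := by
  rw [List.isChain_iff_forall_rel_of_append_cons_cons] at h
  push Not at h
  obtain ⟨x, y, l₁, l₂, hl, hxy⟩ := h
  exact ⟨l₁, x, y, l₂, hl, hxy⟩

lemma exists_isRotated_of_not_chain {w : List α} (hw : ¬ Cycle.Chain r (w : Cycle α)) :
    ∃ (l : List α) (hl : l ≠ []), w ~r l ∧ ¬ r (l.getLast hl) (l.head hl) := by
  have hne : w ≠ [] := by
    rintro rfl
    exact hw (Cycle.Chain.nil r)
  by_cases hlast : r (w.getLast hne) (w.head hne)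
  · obtain ⟨l₁, x, y, l₂, rfl, hxy⟩ :=
      exists_eq_append_of_not_isChain fun h => hw ((cycle_chain_iff hne).2 ⟨hlast, h⟩)
    refine ⟨y :: l₂ ++ (l₁ ++ [x]), by simp, ?_, by simpa using hxy⟩
    simpa using List.isRotated_append (l := l₁ ++ [x]) (l' := y :: l₂)
  · exact ⟨w, hne, List.IsRotated.refl w, hlast⟩

lemma countP_le_countP_of_isChain (p q : α → Prop) [DecidablePred p] [DecidablePred q]
    (l : List α) (a b : α) (h : (a :: (l ++ [b])).IsChain fun x y => p x → q y) :
    (a :: l).countP p ≤ (l ++ [b]).countP q := by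
  induction l generalizing a with
  | nil =>
    have : p a → q b := by simpa using h
    by_cases p a <;> simp_all
  | cons c l ih =>
    obtain ⟨hac, hl⟩ := List.isChain_cons_cons.1 h
    rw [List.countP_cons (l := c :: l), List.cons_append, List.countP_cons (l := l ++ [b])]
    have : (if decide (p a) = true then 1 else 0) ≤ if decide (q c) = true then 1 else 0 := by
      split_ifs <;> simp_all
    exact add_le_add (ih c hl) this

lemma exists_isRotated_of_countP_lt {p q : α → Prop} [DecidablePred p] [DecidablePred q]
    {w : List α} (h : w.countP q < w.countP p) :
    ∃ (l : List α) (hl : l ≠ []), w ~r l ∧ p (l.getLast hl) ∧ ¬ q (l.head hl) := by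
  suffices ¬ Cycle.Chain (fun x y => p x → q y) (w : Cycle α) by
    simpa only [Classical.not_imp] using exists_isRotated_of_not_chain this
  intro hw
  obtain ⟨a, l, rfl⟩ : ∃ a l, w = a :: l := List.exists_cons_of_ne_nil (by rintro rfl; simp at h)
  have hle := countP_le_countP_of_isChain p q l a a ((Cycle.chain_coe_cons _ a l).1 hw)
  rw [(List.perm_append_singleton a l).countP_eq] at hle
  exact hle.not_gt h

lemma exists_isRotated_of_mem {p : α → Prop} {w : List α} {x y : α} (hx : x ∈ w) (hpx : ¬ p x)
    (hy : y ∈ w) (hpy : p y) :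
    ∃ (l : List α) (hl : l ≠ []), w ~r l ∧ ¬ p (l.getLast hl) ∧ p (l.head hl) := by
  suffices ¬ Cycle.Chain (fun x y => p y → p x) (w : Cycle α) by
    simpa only [Classical.not_imp, and_comm] using exists_isRotated_of_not_chain this
  have : IsTrans α fun x y => p y → p x := ⟨fun _ _ _ h₁ h₂ h => h₁ (h₂ h)⟩
  exact fun h => hpx (Cycle.chain_iff_pairwise.1 h x hx y hy hpy)

end CyclicChain

lemma countP_mem_le {α : Type*} [DecidableEq α] {s : Multiset α} {B : Finset α} {c : ℕ}
    (h : ∀ b ∈ B, s.count b ≤ c) : s.countP (· ∈ B) ≤ B.card * c := by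
  rw [Multiset.countP_eq_card_filter,
    ← Multiset.sum_count_eq_card (s := B) fun b hb => (Multiset.mem_filter.1 hb).2]
  refine Finset.sum_le_card_nsmul B _ c fun b hb => ?_
  exact (Multiset.count_le_of_le b (Multiset.filter_le _ s)).trans (h b hb)

lemma exists_pairwise_not_rel {α : Type*} (r : α → α → Prop) [DecidableRel r]
    (k m : ℕ) (A : Finset α) (hr : ∀ a ∈ A, (A.filter (r a)).card ≤ k)
    (hA : (2 * k + 1) * m ≤ A.card) :
    ∃ S ⊆ A, S.card = m ∧ (S : Set α).Pairwise fun a b => ¬ r a b := by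
  classical
  induction m generalizing A with
  | zero => exact ⟨∅, by simp, rfl, by simp⟩
  | succ m ih =>
    -- Averaging in-degrees: some `a` has at most `k` in-neighbours; discard all its neighbours.
    obtain ⟨a, ha, hin⟩ : ∃ a ∈ A, (A.filter (r · a)).card ≤ k := by
      by_contra! hlt
      have hcard : A.card * (k + 1) ≤ A.card * k :=
        Finset.card_mul_le_card_mul (fun a b => r b a) hlt hr
      have : 0 < A.card := by lia
      nlinarith
    set N := insert a (A.filter (r a) ∪ A.filter (r · a)) with hN
    have hNcard : N.card ≤ 2 * k + 1 := by
      have h₁ := Finset.card_insert_le a (A.filter (r a) ∪ A.filter (r · a))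
      have h₂ := Finset.card_union_le (A.filter (r a)) (A.filter (r · a))
      have h₃ := hr a ha
      lia
    obtain ⟨S, hSA, hScard, hS⟩ := ih (A \ N)
      (fun b hb => (Finset.card_le_card (Finset.filter_subset_filter _ Finset.sdiff_subset)).trans
        (hr b (Finset.mem_sdiff.1 hb).1))
      (by have := Finset.le_card_sdiff N A; lia)
    have hSN : ∀ b ∈ S, b ≠ a ∧ ¬ r a b ∧ ¬ r b a := by
      intro b hb
      have := Finset.mem_sdiff.1 (hSA hb)
      simp only [hN, Finset.mem_insert, Finset.mem_union, Finset.mem_filter] at this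
      tauto
    refine ⟨insert a S, Finset.insert_subset ha (hSA.trans Finset.sdiff_subset), ?_, ?_⟩
    · rw [Finset.card_insert_of_notMem fun h => (hSN a h).1 rfl, hScard]
    · rw [Finset.coe_insert]
      exact hS.insert fun b hb _ => (hSN b hb).2

lemma toList_sdiff_append_toList_inter_perm {α : Type*} [DecidableEq α] (s t : Finset α) :
    ((s \ t).toList ++ (s ∩ t).toList).Perm s.toList := by
  rw [← Multiset.coe_eq_coe, ← Multiset.coe_add]
  simp only [Finset.coe_toList, Finset.sdiff_val, Finset.inter_val, Multiset.sub_add_inter]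

lemma coe_eq_toMultiset_iff {α : Type*} [BEq α] [LawfulBEq α] {l : List α} {v : α →₀ ℕ} :
    (l : Multiset α) = Finsupp.toMultiset v ↔ ∀ a, l.count a = v a := by
  classical
  simp only [Multiset.ext, Multiset.coe_count, Finsupp.count_toMultiset]
  convert Iff.rfl

/-- The letter `β` may follow the letter `α` in an anti-path. -/
abbrev Follows (α β : Letter) : Prop := src β ∉ trg α

lemma src_notMem_trg (α : Letter) : src α ∉ trg α := α.2.2

lemma card_trg (α : Letter) : (trg α).card = 2 := α.2.1

lemma mem_srcs {v : Letter →₀ ℕ} {a : Atom} :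
    a ∈ srcs v ↔ ∃ α ∈ v.support, src α = a :=
  Finset.mem_image

lemma src_mem_srcs {v : Letter →₀ ℕ} {α : Letter} (hα : α ∈ v.support) : src α ∈ srcs v :=
  Finset.mem_image_of_mem src hα

lemma isAntiCycle_iff {w : List Letter} :
    IsAntiCycle w ↔ w ≠ [] ∧ Cycle.Chain Follows (w : Cycle Letter) := by
  constructor
  · rintro ⟨⟨hne, hchain⟩, hlast⟩
    exact ⟨hne, (cycle_chain_iff hne).2 ⟨hlast hne, hchain⟩⟩
  · rintro ⟨hne, h⟩
    obtain ⟨hlast, hchain⟩ := (cycle_chain_iff hne).1 h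
    exact ⟨⟨hne, hchain⟩, fun _ => hlast⟩

lemma IsAntiCycle.isChain {w : List Letter} (hw : IsAntiCycle w) : w.IsChain Follows := hw.1.2

lemma IsAntiCycle.isRotated {w l : List Letter} (hw : IsAntiCycle w) (h : w ~r l) :
    IsAntiCycle l := by
  rw [isAntiCycle_iff] at hw ⊢
  rw [← Cycle.coe_eq_coe.2 h]
  exact ⟨fun hl => hw.1 (List.isRotated_nil_iff.1 (hl ▸ h)), hw.2⟩

lemma isAntiCycle_append_iff {l₁ l₂ : List Letter} (h₁ : l₁ ≠ []) (h₂ : l₂ ≠ []) :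
    IsAntiCycle (l₁ ++ l₂) ↔
      (l₁.IsChain Follows ∧ Follows (l₁.getLast h₁) (l₂.head h₂)) ∧
        l₂.IsChain Follows ∧ Follows (l₂.getLast h₂) (l₁.head h₁) := by
  rw [isAntiCycle_iff, cycle_chain_append_iff h₁ h₂]
  exact and_iff_right (List.append_ne_nil_of_left_ne_nil h₁ l₂)

lemma mass_eq_countP (v : Letter →₀ ℕ) (P : Set Letter) [DecidablePred (· ∈ P)] :
    mass v P = (Finsupp.toMultiset v).countP (· ∈ P) := by
  rw [mass, Multiset.countP_eq_card_filter, ← Multiset.toFinset_sum_count_eq,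
    Multiset.toFinset_filter, Finsupp.toFinset_toMultiset, Finset.sum_filter]
  refine Finset.sum_congr rfl fun α _ => ?_
  split_ifs with h
  · rw [Multiset.count_filter_of_pos h, Finsupp.count_toMultiset]
  · rfl

/-! ### Necessity of non-degeneracy -/

section Necessity

variable {v : Letter →₀ ℕ} {w : List Letter}

lemma mem_iff_mem_support (hwv : (w : Multiset Letter) = Finsupp.toMultiset v) {α : Letter} :
    α ∈ w ↔ α ∈ v.support := by
  rw [← Finsupp.mem_toMultiset, ← hwv, Multiset.mem_coe]

lemma exists_mem_src_notMem (hwv : (w : Multiset Letter) = Finsupp.toMultiset v) (D : Finset Atom)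
    (hD : D.card < (srcs v).card) : ∃ x ∈ w, src x ∉ D := by
  obtain ⟨a, ha, haD⟩ := Finset.exists_mem_notMem_of_card_lt_card hD
  obtain ⟨x, hx, rfl⟩ := mem_srcs.1 ha
  exact ⟨x, (mem_iff_mem_support hwv).2 hx, haD⟩

lemma exists_mem_src_eq (hwv : (w : Multiset Letter) = Finsupp.toMultiset v) {d : Atom}
    (hd : d ∈ srcs v) : ∃ y ∈ w, src y = d := by
  obtain ⟨y, hy, rfl⟩ := mem_srcs.1 hd
  exact ⟨y, (mem_iff_mem_support hwv).2 hy, rfl⟩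

lemma IsAntiCycle.exists_isRotated_entering (hw : IsAntiCycle w)
    (hwv : (w : Multiset Letter) = Finsupp.toMultiset v) {D : Finset Atom} {d : Atom} (hdD : d ∈ D)
    (hd : d ∈ srcs v) (hD : D.card < (srcs v).card) :
    ∃ (l : List Letter) (hl : l ≠ []), w ~r l ∧ src (l.getLast hl) ∉ D ∧ src (l.head hl) ∈ D ∧
      Follows (l.getLast hl) (l.head hl) := by
  obtain ⟨x, hx, hxD⟩ := exists_mem_src_notMem hwv D hD
  obtain ⟨y, hy, rfl⟩ := exists_mem_src_eq hwv hd
  obtain ⟨l, hl, hwl, hlast, hhead⟩ :=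
    exists_isRotated_of_mem (p := fun α => src α ∈ D) hx hxD hy hdD
  exact ⟨l, hl, hwl, hlast, hhead, (hw.isRotated hwl).2 hl⟩

lemma src_mem_inn {α : Letter} {e : Atom} (hα : α ∈ v.support) (he : e ∈ srcs v) (hne : src α ≠ e)
    (ht : e ∉ trg α) : src α ∈ inn v e :=
  ⟨hne, src_mem_srcs hα, he, α, hα, rfl, ht⟩

lemma IsAntiCycle.exists_mem_inn (hw : IsAntiCycle w)
    (hwv : (w : Multiset Letter) = Finsupp.toMultiset v) {D : Finset Atom} {d : Atom} (hdD : d ∈ D)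
    (hD : D ⊆ srcs v) (hDcard : D.card < (srcs v).card) : ∃ a ∉ D, ∃ e ∈ D, a ∈ inn v e := by
  obtain ⟨l, hl, hwl, hlast, hhead, hfol⟩ :=
    hw.exists_isRotated_entering hwv hdD (hD hdD) hDcard
  have hsupp : l.getLast hl ∈ v.support :=
    (mem_iff_mem_support hwv).1 (hwl.mem_iff.2 (List.getLast_mem hl))
  exact ⟨_, hlast, _, hhead,
    src_mem_inn hsupp (hD hhead) (fun h => hlast (h ▸ hhead)) hfol⟩

lemma exists_eq_append_entering {l : List Letter} (hl : l.IsChain Follows) (hne : l ≠ [])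
    {e : Atom} (hhead : src (l.head hne) ≠ e) (he : ∃ α ∈ l, src α = e) :
    ∃ l₁ l₂, l = l₁ ++ l₂ ∧ (∃ x ∈ l₁, src x ≠ e ∧ e ∉ trg x) ∧ l₂ ≠ [] := by
  have hnot : ¬ l.IsChain fun x y => src y = e → src x = e := by
    have : Trans (fun x y => src y = e → src x = e) (fun x y => src y = e → src x = e)
      fun x y => src y = e → src x = e := ⟨fun h₁ h₂ h => h₁ (h₂ h)⟩
    obtain ⟨a, l, rfl⟩ := List.exists_cons_of_ne_nil hne
    obtain ⟨α, hα, hαe⟩ := he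
    intro hchain
    rcases List.mem_cons.1 hα with rfl | hα
    · exact hhead hαe
    · exact hhead (hchain.rel_cons hα hαe)
  obtain ⟨l₁, x, y, l₂, rfl, hxy⟩ := exists_eq_append_of_not_isChain hnot
  obtain ⟨hy, hx⟩ := Classical.not_imp.1 hxy
  have hfol : Follows x y := (List.isChain_append_cons_cons.1 hl).2.1
  exact ⟨l₁ ++ [x], y :: l₂, List.append_cons .., ⟨x, by simp, hx, hy ▸ hfol⟩,
    List.cons_ne_nil y l₂⟩

lemma IsAntiCycle.two_le_mass (hw : IsAntiCycle w)
    (hwv : (w : Multiset Letter) = Finsupp.toMultiset v) {d e : Atom} (hd : d ∈ srcs v)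
    (he : e ∈ srcs v) (hde : d ≠ e) : 2 ≤ mass v (precSet v d ∪ precSet v e) := by
  classical
  obtain ⟨l, hl, hwl, hlast, hhead, hfol⟩ := hw.exists_isRotated_entering hwv
    (Finset.mem_singleton_self d) hd
    (Finset.card_singleton d ▸ Finset.one_lt_card.2 ⟨d, hd, e, he, hde⟩)
  rw [Finset.mem_singleton] at hlast hhead
  obtain ⟨α, hα, hαe⟩ := exists_mem_src_eq hwv he
  obtain ⟨l₁, l₂, rfl, ⟨x, hx, hxe, hxt⟩, hl₂⟩ := exists_eq_append_entering
    (hw.isRotated hwl).isChain hl (hhead.trans_ne hde) ⟨α, hwl.mem_iff.1 hα, hαe⟩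
  have hsupp : ∀ β ∈ l₁ ++ l₂, β ∈ v.support := fun β hβ =>
    (mem_iff_mem_support hwv).1 (hwl.mem_iff.2 hβ)
  rw [Follows, hhead] at hfol
  rw [List.getLast_append_of_ne_nil hl hl₂] at hlast hfol
  have hlast_mem := List.getLast_mem hl₂
  rw [mass_eq_countP, ← hwv, Multiset.coe_countP, hwl.perm.countP_eq, List.countP_append]
  refine Nat.add_le_add (List.countP_pos_iff.2 ⟨x, hx, ?_⟩)
    (List.countP_pos_iff.2 ⟨l₂.getLast hl₂, hlast_mem, ?_⟩)
  · exact decide_eq_true (Or.inr ⟨hsupp x (List.mem_append_left l₂ hx), hxe, hxt⟩)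
  · exact decide_eq_true (Or.inl ⟨hsupp _ (List.mem_append_right l₁ hlast_mem), hlast, hfol⟩)

lemma IsAntiCycle.nonDeg (hw : IsAntiCycle w)
    (hwv : (w : Multiset Letter) = Finsupp.toMultiset v) (hv : 3 ≤ (srcs v).card) : NonDeg v := by
  refine ⟨fun e he => ?_, fun d hd e he hde hsub => ?_, fun d hd e he => hw.two_le_mass hwv hd he⟩
  · obtain ⟨a, -, e', he', hae⟩ := hw.exists_mem_inn hwv (Finset.mem_singleton_self e)
      (Finset.singleton_subset_iff.2 he) (by rw [Finset.card_singleton]; lia)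
    exact ⟨a, Finset.mem_singleton.1 he' ▸ hae⟩
  · obtain ⟨a, ha, b, hb, hab⟩ := hw.exists_mem_inn hwv (Finset.mem_insert_self d {e})
      (Finset.insert_subset hd (Finset.singleton_subset_iff.2 he))
      (by rw [Finset.card_pair hde]; lia)
    rw [Finset.mem_insert, Finset.mem_singleton] at ha hb
    have hab' : a ∈ inn v d ∪ inn v e := by
      rcases hb with rfl | rfl
      exacts [Or.inl hab, Or.inr hab]
    exact ha (hsub hab')

end Necessity

/-! ### Insertion into anti-cycles -/

section Insertion

variable {w : List Letter}

lemma exists_isAntiCycle_append {P : List Letter} (hw : IsAntiCycle w) (hP : P.IsChain Follows)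
    (hne : P ≠ [])
    (hlt : w.countP (src · ∈ trg (P.getLast hne)) < w.countP (Follows · (P.head hne))) :
    ∃ w', IsAntiCycle w' ∧ w'.Perm (P ++ w) := by
  obtain ⟨l, hl, hwl, hlast, hhead⟩ := exists_isRotated_of_countP_lt hlt
  exact ⟨P ++ l, (isAntiCycle_append_iff hne hl).2
    ⟨⟨hP, hhead⟩, (hw.isRotated hwl).isChain, hlast⟩, hwl.perm.symm.append_left P⟩

lemma countP_src_mem_trg_le {c : ℕ} (hc : ∀ a, (w.map src).count a ≤ c) (α : Letter) :
    w.countP (src · ∈ trg α) ≤ 2 * c := by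
  have h := countP_mem_le (s := ((w.map src : List Atom) : Multiset Atom)) (B := trg α)
    fun a _ => (Multiset.coe_count a _).trans_le (hc a)
  rwa [card_trg, Multiset.coe_countP, List.countP_map] at h

lemma exists_isAntiCycle_flatten_append {c : ℕ} {segs : List (List Letter)}
    (hw : IsAntiCycle w) (hc : ∀ a, ((segs.flatten ++ w).map src).count a ≤ c)
    (hsegs : ∀ P ∈ segs, P.IsChain Follows ∧ ∃ α ∈ P.head?, 2 * c < w.countP (Follows · α)) :
    ∃ w', IsAntiCycle w' ∧ w'.Perm (segs.flatten ++ w) := by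
  induction segs with
  | nil => exact ⟨w, hw, List.Perm.refl w⟩
  | cons P segs ih =>
    obtain ⟨⟨hP, α, hα, hαc⟩, hsegs⟩ := List.forall_mem_cons.1 hsegs
    have hc' (a : Atom) : ((segs.flatten ++ w).map src).count a ≤ c := by
      refine le_trans (List.Sublist.count_le a (List.Sublist.map src ?_)) (hc a)
      simp
    obtain ⟨u, hu, hperm⟩ := ih hc' hsegs
    have hne : P ≠ [] := by
      rintro rfl
      simp at hα
    have hhead : P.head hne = α := by
      rwa [List.head?_eq_some_head hne, Option.mem_some_iff] at hα
    have hlt : u.countP (src · ∈ trg (P.getLast hne)) < u.countP (Follows · (P.head hne)) := by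
      rw [hperm.countP_eq, hperm.countP_eq, List.countP_append (p := fun x => Follows x _), hhead]
      have := countP_src_mem_trg_le hc' (P.getLast hne)
      lia
    obtain ⟨w', hw', hw'perm⟩ := exists_isAntiCycle_append hu hP hne hlt
    refine ⟨w', hw', hw'perm.trans ?_⟩
    rw [List.flatten_cons, List.append_assoc]
    exact hperm.append_left P

lemma exists_isAntiCycle_cons {α β : Letter} (hw : IsAntiCycle w) (hβ : β ∈ w)
    (hβα : src β = src α) : ∃ w', IsAntiCycle w' ∧ w'.Perm (α :: w) := by
  obtain ⟨l₁, l₂, rfl⟩ := List.append_of_mem hβ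
  have hrot : l₁ ++ β :: l₂ ~r β :: l₂ ++ l₁ := List.isRotated_append
  have hl := hw.isRotated hrot
  refine ⟨[α] ++ (β :: l₂ ++ l₁), (isAntiCycle_append_iff (by simp) (by simp)).2
    ⟨⟨List.isChain_singleton α, ?_⟩, hl.isChain, ?_⟩, hrot.perm.symm.cons α⟩
  · change src β ∉ trg α
    exact hβα ▸ src_notMem_trg α
  · change src α ∉ trg ((β :: l₂ ++ l₁).getLast _)
    exact hβα ▸ hl.2 (by simp)

lemma exists_isAntiCycle_add (R : Multiset Letter) (hw : IsAntiCycle w)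
    (hR : ∀ α ∈ R, ∃ β ∈ w, src β = src α) :
    ∃ w', IsAntiCycle w' ∧ (w' : Multiset Letter) = R + w := by
  induction R using Multiset.induction_on with
  | empty => exact ⟨w, hw, (zero_add _).symm⟩
  | cons α R ih =>
    obtain ⟨⟨β, hβ, hβα⟩, hR⟩ := Multiset.forall_mem_cons.1 hR
    obtain ⟨u, hu, hueq⟩ := ih hR
    have hβu : β ∈ u := by
      rw [← Multiset.mem_coe, hueq]
      exact Multiset.mem_add.2 (Or.inr hβ)
    obtain ⟨w', hw', hperm⟩ := exists_isAntiCycle_cons hu hβu hβα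
    refine ⟨w', hw', ?_⟩
    rw [Multiset.coe_eq_coe.2 hperm, ← Multiset.cons_coe, hueq, Multiset.cons_add]

end Insertion

/-! ### The independent core -/

lemma exists_transversal (v : Letter →₀ ℕ) :
    ∃ E ⊆ v.support, Set.InjOn src (E : Set Letter) ∧ E.image src = srcs v := by
  obtain ⟨E, hE, hinj, himage⟩ := Finset.exists_subset_injOn_image_eq_of_surjOn
    (v.support : Set Letter) (srcs v) (f := src) fun a ha => by simpa [mem_srcs] using ha
  exact ⟨E, Finset.coe_subset.1 hE, hinj, himage⟩

lemma card_filter_src_mem_trg_le {E : Finset Letter} (hE : Set.InjOn src (E : Set Letter))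
    (α : Letter) : (E.filter (src · ∈ trg α)).card ≤ 2 := by
  rw [← card_trg α]
  exact Finset.card_le_card_of_injOn src (fun β hβ => (Finset.mem_filter.1 hβ).2)
    (hE.mono (Finset.filter_subset _ E))

lemma exists_pairwise_follows {E : Finset Letter} (hE : Set.InjOn src (E : Set Letter)) {m : ℕ}
    (hm : 5 * m ≤ E.card) : ∃ S ⊆ E, S.card = m ∧ (S : Set Letter).Pairwise Follows :=
  exists_pairwise_not_rel (fun α β => src β ∈ trg α) 2 m E
    (fun α _ => card_filter_src_mem_trg_le hE α) hm

lemma isAntiCycle_toList {S : Finset Letter} (hne : S.Nonempty)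
    (hS : (S : Set Letter).Pairwise Follows) : IsAntiCycle S.toList := by
  refine isAntiCycle_iff.2 ⟨Finset.Nonempty.toList_ne_nil hne,
    Cycle.chain_of_pairwise fun α hα β hβ => ?_⟩
  simp only [Cycle.mem_coe_iff, Finset.mem_toList] at hα hβ
  rcases eq_or_ne α β with rfl | hαβ
  exacts [src_notMem_trg α, hS hα hβ hαβ]

lemma card_filter_card_le_le_two (X : Finset Atom) {S : Finset Letter} {k : ℕ}
    (hk : 3 * k < S.card) :
    (X.filter fun x => (S.filter (x ∉ trg ·)).card ≤ k).card ≤ 2 := by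
  set B := X.filter fun x => (S.filter (x ∉ trg ·)).card ≤ k
  have hle : B.card * (S.card - k) ≤ S.card * 2 := by
    refine Finset.card_mul_le_card_mul (fun x α => x ∈ trg α) (fun x hx => ?_) fun α _ => ?_
    · have hxk := (Finset.mem_filter.1 hx).2
      have := Finset.card_filter_add_card_filter_not (s := S) (x ∈ trg ·)
      rw [Finset.bipartiteAbove]
      lia
    · rw [← card_trg α]
      exact Finset.card_le_card fun x hx => (Finset.mem_filter.1 hx).2
  by_contra! hlt
  have := Nat.mul_le_mul_right (S.card - k) (Nat.succ_le_of_lt hlt)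
  lia

lemma exists_pair_forall_lt_card {X : Finset Atom} {S : Finset Letter} {k : ℕ} (hX : 2 ≤ X.card)
    (hk : 3 * k < S.card) :
    ∃ D ⊆ X, D.card = 2 ∧ ∀ x ∈ X, x ∉ D → k < (S.filter (x ∉ trg ·)).card := by
  obtain ⟨D, hBD, hDX, hD⟩ := Finset.exists_subsuperset_card_eq (Finset.filter_subset _ X)
    (card_filter_card_le_le_two X hk) hX
  refine ⟨D, hDX, hD, fun x hx hxD => ?_⟩
  by_contra! hle
  exact hxD (hBD (Finset.mem_filter.2 ⟨hx, hle⟩))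

/-! ### Detours through the exceptional sources -/

/-- A family of at most four letters of `v`, arranged into anti-paths that start outside `D` and
together visit every source in `D`. -/
structure IsDetour (v : Letter →₀ ℕ) (D : Finset Atom) (segs : List (List Letter)) : Prop where
  isChain : ∀ P ∈ segs, P.IsChain Follows
  exists_head : ∀ P ∈ segs, ∃ α ∈ P.head?, src α ∈ srcs v ∧ src α ∉ D
  le : (segs.flatten : Multiset Letter) ≤ Finsupp.toMultiset v
  visits : ∀ d ∈ D, ∃ α ∈ segs.flatten, src α = d
  length_le : segs.flatten.length ≤ 4

/-- Two occurrences of letters `β`, `γ` of `v` such that `β` enters `d` from outside `{d, e}` and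
`γ` enters `e` from a source other than `e`, possibly `d`. -/
structure IsEntry (v : Letter →₀ ℕ) (d e : Atom) (β γ : Letter) : Prop where
  le : {β, γ} ≤ Finsupp.toMultiset v
  src_left_ne_left : src β ≠ d
  src_left_ne_right : src β ≠ e
  left_notMem_trg : d ∉ trg β
  src_right_ne : src γ ≠ e
  right_notMem_trg : e ∉ trg γ

section Detour

variable {v : Letter →₀ ℕ} {d e : Atom}

lemma NonDeg.exists_entering (hv : NonDeg v) (he : e ∈ srcs v) :
    ∃ δ ∈ v.support, src δ ≠ e ∧ e ∉ trg δ := by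
  obtain ⟨_, hne, -, -, δ, hδ, rfl, hδe⟩ := hv.1 e he
  exact ⟨δ, hδ, hne, hδe⟩

lemma NonDeg.exists_entering_pair (hv : NonDeg v) (hd : d ∈ srcs v) (he : e ∈ srcs v)
    (hde : d ≠ e) :
    ∃ β ∈ v.support, src β ≠ d ∧ src β ≠ e ∧ (d ∉ trg β ∨ e ∉ trg β) := by
  obtain ⟨a, ha, hade⟩ := Set.not_subset.1 (hv.2.1 d hd e he hde)
  rw [Set.mem_insert_iff, Set.mem_singleton_iff, not_or] at hade
  rcases ha with ⟨-, -, -, β, hβ, rfl, hβt⟩ | ⟨-, -, -, β, hβ, rfl, hβt⟩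
  exacts [⟨β, hβ, hade.1, hade.2, Or.inl hβt⟩, ⟨β, hβ, hade.1, hade.2, Or.inr hβt⟩]

lemma NonDeg.exists_pair_le_toMultiset (hv : NonDeg v) (hd : d ∈ srcs v) (he : e ∈ srcs v)
    (hde : d ≠ e) {β : Letter} (hβ : β ∈ v.support) :
    ∃ γ ∈ precSet v d ∪ precSet v e, {β, γ} ≤ Finsupp.toMultiset v := by
  classical
  have hmass := hv.2.2 d hd e he hde
  rw [mass_eq_countP, ← Multiset.cons_erase ((Finsupp.mem_toMultiset v β).2 hβ),
    Multiset.countP_cons] at hmass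
  obtain ⟨γ, hγ, hγmem⟩ :=
    Multiset.countP_pos.1 (show 0 < ((Finsupp.toMultiset v).erase β).countP
      (· ∈ precSet v d ∪ precSet v e) by split_ifs at hmass <;> lia)
  refine ⟨γ, hγmem, ?_⟩
  rw [Multiset.insert_eq_cons, ← Multiset.cons_erase ((Finsupp.mem_toMultiset v β).2 hβ),
    Multiset.cons_le_cons_iff, Multiset.singleton_le]
  exact hγ

lemma pair_le_toMultiset {β γ : Letter} (hβ : β ∈ v.support) (hγ : γ ∈ v.support) (h : β ≠ γ) :
    {β, γ} ≤ Finsupp.toMultiset v :=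
  (Multiset.cons_le_of_notMem (by simpa using h)).2
    ⟨(Finsupp.mem_toMultiset v β).2 hβ, Multiset.singleton_le.2 ((Finsupp.mem_toMultiset v γ).2 hγ)⟩

lemma NonDeg.exists_isEntry_of_notMem_trg (hv : NonDeg v) (hd : d ∈ srcs v) (he : e ∈ srcs v)
    (hde : d ≠ e) {β : Letter} (hβ : β ∈ v.support) (hβd : src β ≠ d) (hβe : src β ≠ e)
    (hdβ : d ∉ trg β) : ∃ γ, IsEntry v d e β γ ∨ IsEntry v e d β γ := by
  obtain ⟨δ, hδ, hδe, heδ⟩ := hv.exists_entering he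
  rcases ne_or_eq β δ with hβδ | rfl
  · exact ⟨δ, Or.inl ⟨pair_le_toMultiset hβ hδ hβδ, hβd, hβe, hdβ, hδe, heδ⟩⟩
  · obtain ⟨γ, ⟨-, hγ, hγt⟩ | ⟨-, hγ, hγt⟩, hle⟩ := hv.exists_pair_le_toMultiset hd he hde hβ
    exacts [⟨γ, Or.inr ⟨hle, hβe, hβd, heδ, hγ, hγt⟩⟩, ⟨γ, Or.inl ⟨hle, hβd, hβe, hdβ, hγ, hγt⟩⟩]

lemma NonDeg.exists_isEntry (hv : NonDeg v) (hd : d ∈ srcs v) (he : e ∈ srcs v) (hde : d ≠ e) :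
    ∃ β γ, IsEntry v d e β γ ∨ IsEntry v e d β γ := by
  obtain ⟨β, hβ, hβd, hβe, hdβ | heβ⟩ := hv.exists_entering_pair hd he hde
  · exact ⟨β, hv.exists_isEntry_of_notMem_trg hd he hde hβ hβd hβe hdβ⟩
  · obtain ⟨γ, h⟩ := hv.exists_isEntry_of_notMem_trg he hd hde.symm hβ hβe hβd heβ
    exact ⟨β, γ, h.symm⟩

lemma IsEntry.left_mem_support {β γ : Letter} (h : IsEntry v d e β γ) : β ∈ v.support :=
  (Finsupp.mem_toMultiset v β).1 (Multiset.mem_of_le h.le (Multiset.mem_cons_self β {γ}))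

lemma IsEntry.right_mem_support {β γ : Letter} (h : IsEntry v d e β γ) : γ ∈ v.support :=
  (Finsupp.mem_toMultiset v γ).1
    (Multiset.mem_of_le h.le (Multiset.mem_cons_of_mem (Multiset.mem_singleton_self γ)))

lemma cons_le_toMultiset {α : Letter} {s : Multiset Letter} (hα : α ∈ v.support)
    (hs : s ≤ Finsupp.toMultiset v) (hαs : ∀ β ∈ s, src β ≠ src α) :
    α ::ₘ s ≤ Finsupp.toMultiset v :=
  (Multiset.cons_le_of_notMem fun h => hαs α h rfl).2 ⟨(Finsupp.mem_toMultiset v α).2 hα, hs⟩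

lemma IsEntry.isDetour_of_src_eq {β γ ε : Letter} (h : IsEntry v d e β γ) (hγ : src γ = d)
    (hε : ε ∈ v.support) (hεe : src ε = e) : IsDetour v {d, e} [[β, γ, ε]] where
  isChain := by
    have h₁ := h.left_notMem_trg
    have h₂ := h.right_notMem_trg
    simp_all [Follows]
  exists_head := by
    simp only [List.mem_singleton, forall_eq]
    exact ⟨β, rfl, src_mem_srcs h.left_mem_support,
      by simpa using ⟨h.src_left_ne_left, h.src_left_ne_right⟩⟩
  le := by
    have hperm : [β, γ, ε].Perm [ε, β, γ] := List.perm_append_singleton ε [β, γ]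
    have hcons := cons_le_toMultiset hε h.le (by
      simpa [hεe] using ⟨h.src_left_ne_right, h.src_right_ne⟩)
    rw [List.flatten_singleton, Multiset.coe_eq_coe.2 hperm]
    exact hcons
  visits := by simp [hγ, hεe]
  length_le := by simp

lemma IsEntry.isDetour_of_src_ne {β γ δ ε : Letter} (h : IsEntry v d e β γ) (hde : d ≠ e)
    (hγ : src γ ≠ d) (hδ : δ ∈ v.support) (hδd : src δ = d) (hε : ε ∈ v.support)
    (hεe : src ε = e) : IsDetour v {d, e} [[β, δ], [γ, ε]] where
  isChain := by
    have h₁ := h.left_notMem_trg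
    have h₂ := h.right_notMem_trg
    simp_all [Follows]
  exists_head := by
    simp only [List.forall_mem_cons, List.not_mem_nil, false_imp_iff, implies_true, and_true]
    exact ⟨⟨β, rfl, src_mem_srcs h.left_mem_support,
        by simpa using ⟨h.src_left_ne_left, h.src_left_ne_right⟩⟩,
      ⟨γ, rfl, src_mem_srcs h.right_mem_support, by simpa using ⟨hγ, h.src_right_ne⟩⟩⟩
  le := by
    have hperm : [β, δ, γ, ε].Perm [δ, ε, β, γ] :=
      (List.Perm.swap δ β [γ, ε]).trans ((List.perm_append_singleton ε [β, γ]).cons δ)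
    have hcons₁ := cons_le_toMultiset hε h.le (by
      simpa [hεe] using ⟨h.src_left_ne_right, h.src_right_ne⟩)
    have hcons₂ := cons_le_toMultiset hδ hcons₁ (by
      simpa [hεe, hδd] using ⟨hde.symm, h.src_left_ne_left, hγ⟩)
    rw [show [[β, δ], [γ, ε]].flatten = [β, δ, γ, ε] from rfl, Multiset.coe_eq_coe.2 hperm]
    exact hcons₂
  visits := by simp [hδd, hεe]
  length_le := by simp

lemma IsEntry.exists_isDetour {β γ : Letter} (h : IsEntry v d e β γ) (hd : d ∈ srcs v)
    (he : e ∈ srcs v) (hde : d ≠ e) : ∃ segs, IsDetour v {d, e} segs := by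
  obtain ⟨δ, hδ, hδd⟩ := mem_srcs.1 hd
  obtain ⟨ε, hε, hεe⟩ := mem_srcs.1 he
  by_cases hγ : src γ = d
  exacts [⟨_, h.isDetour_of_src_eq hγ hε hεe⟩, ⟨_, h.isDetour_of_src_ne hde hγ hδ hδd hε hεe⟩]

lemma NonDeg.exists_isDetour (hv : NonDeg v) {D : Finset Atom} (hD : D ⊆ srcs v)
    (hcard : D.card = 2) : ∃ segs, IsDetour v D segs := by
  obtain ⟨d, e, hde, rfl⟩ := Finset.card_eq_two.1 hcard
  obtain ⟨hd, he⟩ := Finset.insert_subset_iff.1 hD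
  rw [Finset.singleton_subset_iff] at he
  obtain ⟨β, γ, h | h⟩ := hv.exists_isEntry hd he hde
  · exact h.exists_isDetour hd he hde
  · rw [Finset.pair_comm]
    exact h.exists_isDetour he hd hde.symm

end Detour

/-! ### Assembling an anti-cycle -/

/-- The letters of `E` whose source is not the source of a letter of `B`. -/
def fresh (E : Finset Letter) (B : List Letter) : Finset Letter :=
  E.filter fun α => src α ∉ B.map src

section Fresh

variable {E S : Finset Letter} {B : List Letter}

lemma mem_fresh {α : Letter} : α ∈ fresh E B ↔ α ∈ E ∧ src α ∉ B.map src :=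
  Finset.mem_filter

lemma count_map_src_append_fresh_le (hE : Set.InjOn src (E : Set Letter)) {c : ℕ}
    (hB : B.length ≤ c) (hc : 1 ≤ c) (a : Atom) :
    ((B ++ (fresh E B).toList).map src).count a ≤ c := by
  rw [List.map_append, List.count_append]
  by_cases ha : a ∈ B.map src
  · have hfresh : ((fresh E B).toList.map src).count a = 0 := by
      refine List.count_eq_zero.2 fun h => ?_
      obtain ⟨α, hα, rfl⟩ := List.mem_map.1 h
      exact (mem_fresh.1 (Finset.mem_toList.1 hα)).2 ha
    have := List.count_le_length (a := a) (l := B.map src)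
    rw [List.length_map] at this
    lia
  · have hnodup : ((fresh E B).toList.map src).Nodup := by
      refine List.Nodup.map_on (fun α hα β hβ h => hE ?_ ?_ h) (Finset.nodup_toList _)
      exacts [(mem_fresh.1 (Finset.mem_toList.1 hα)).1, (mem_fresh.1 (Finset.mem_toList.1 hβ)).1]
    have := List.nodup_iff_count_le_one.1 hnodup a
    rw [List.count_eq_zero.2 ha]
    lia

lemma card_sdiff_fresh_le (hE : Set.InjOn src (E : Set Letter)) (hSE : S ⊆ E) :
    (S \ fresh E B).card ≤ B.length := by
  have hmaps : ∀ α ∈ S \ fresh E B, src α ∈ (B.map src).toFinset := by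
    intro α hα
    obtain ⟨hαS, hα⟩ := Finset.mem_sdiff.1 hα
    rw [mem_fresh, not_and_not_right] at hα
    exact List.mem_toFinset.2 (hα (hSE hαS))
  calc (S \ fresh E B).card ≤ (B.map src).toFinset.card :=
        Finset.card_le_card_of_injOn src hmaps
          (hE.mono (Finset.coe_subset.2 (Finset.sdiff_subset.trans hSE)))
    _ ≤ B.length := (List.toFinset_card_le _).trans_eq (List.length_map src)

lemma lt_countP_follows_fresh (hE : Set.InjOn src (E : Set Letter)) (hSE : S ⊆ E) {k : ℕ}
    {α : Letter} (hα : k + B.length < (S.filter (src α ∉ trg ·)).card) :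
    k < (fresh E B ∩ S).toList.countP (Follows · α) := by
  have hsub : S.filter (src α ∉ trg ·) ⊆
      (fresh E B ∩ S).filter (src α ∉ trg ·) ∪ S \ fresh E B := by
    intro β hβ
    simp only [Finset.mem_union, Finset.mem_filter, Finset.mem_inter, Finset.mem_sdiff] at hβ ⊢
    tauto
  have hcard := (Finset.card_le_card hsub).trans (Finset.card_union_le _ _)
  have := card_sdiff_fresh_le (B := B) hE hSE
  rw [← Multiset.coe_countP, Finset.coe_toList, Multiset.countP_eq_card_filter]
  change k < ((fresh E B ∩ S).filter (src α ∉ trg ·)).card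
  lia

lemma coe_add_fresh_le {v : Letter →₀ ℕ} (hE : E ⊆ v.support)
    (hB : (B : Multiset Letter) ≤ Finsupp.toMultiset v) :
    (B : Multiset Letter) + (fresh E B).val ≤ Finsupp.toMultiset v := by
  have hdisj : Disjoint (B : Multiset Letter) (fresh E B).val := Multiset.disjoint_left.2
    fun hαB hα => (mem_fresh.1 hα).2 (List.mem_map_of_mem (Multiset.mem_coe.1 hαB))
  rw [(Multiset.add_eq_union_iff_disjoint).2 hdisj]
  refine Multiset.union_le hB ((Multiset.le_iff_subset (fresh E B).nodup).2 fun α hα => ?_)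
  exact (Finsupp.mem_toMultiset v α).2 (hE (mem_fresh.1 hα).1)

end Fresh

section Sufficiency

variable {v : Letter →₀ ℕ}

lemma IsDetour.exists_isAntiCycle {D : Finset Atom} {segs : List (List Letter)}
    (hsegs : IsDetour v D segs) {E S : Finset Letter} (hE : E ⊆ v.support)
    (hinj : Set.InjOn src (E : Set Letter)) (hSE : S ⊆ E)
    (hS : (S : Set Letter).Pairwise Follows) (hScard : 4 < S.card)
    (hD : ∀ a ∈ srcs v, a ∉ D → 12 < (S.filter (a ∉ trg ·)).card) :
    ∃ w, IsAntiCycle w ∧ w.Perm (segs.flatten ++ (fresh E segs.flatten).toList) := by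
  set F := fresh E segs.flatten
  set rest := (F \ S).toList
  set core := (F ∩ S).toList
  have hperm : ((segs ++ rest.map fun α => [α]).flatten ++ core).Perm
      (segs.flatten ++ F.toList) := by
    simpa [← List.flatMap_def] using (toList_sdiff_append_toList_inter_perm F S).append_left
      segs.flatten
  have hcore_cycle : IsAntiCycle core := by
    refine isAntiCycle_toList ?_ (hS.mono (Finset.coe_subset.2 Finset.inter_subset_right))
    rw [← Finset.card_pos]
    have h₁ := card_sdiff_fresh_le (B := segs.flatten) hinj hSE
    have h₂ := Finset.card_sdiff_add_card_inter S F
    have h₃ := hsegs.length_le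
    rw [Finset.inter_comm]
    lia
  have hfollow : ∀ α, src α ∈ srcs v → src α ∉ D → 2 * 4 < core.countP (Follows · α) := by
    intro α hα hαD
    refine lt_countP_follows_fresh hinj hSE ((Nat.add_le_add_left hsegs.length_le _).trans_lt ?_)
    exact hD (src α) hα hαD
  have hcount (a : Atom) :
      (((segs ++ rest.map fun α => [α]).flatten ++ core).map src).count a ≤ 4 := by
    rw [(hperm.map src).count_eq]
    exact count_map_src_append_fresh_le hinj hsegs.length_le (by lia) a
  obtain ⟨w, hw, hwperm⟩ := exists_isAntiCycle_flatten_append hcore_cycle hcount <| by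
    intro P hP
    rcases List.mem_append.1 hP with hP | hP
    · obtain ⟨α, hα, hαv, hαD⟩ := hsegs.exists_head P hP
      exact ⟨hsegs.isChain P hP, α, hα, hfollow α hαv hαD⟩
    · obtain ⟨α, hα, rfl⟩ := List.mem_map.1 hP
      obtain ⟨hαE, hαB⟩ := mem_fresh.1 (Finset.mem_sdiff.1 (Finset.mem_toList.1 hα)).1
      refine ⟨List.isChain_singleton α, α, rfl, hfollow α (src_mem_srcs (hE hαE)) fun hαD => ?_⟩
      exact hαB (List.mem_map.2 (hsegs.visits _ hαD))
  exact ⟨w, hw, hwperm.trans hperm⟩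

lemma NonDeg.exists_isAntiCycle_le (hv : NonDeg v) (hcard : 200 ≤ (srcs v).card) :
    ∃ w, IsAntiCycle w ∧ (w : Multiset Letter) ≤ Finsupp.toMultiset v ∧
      ∀ a ∈ srcs v, ∃ β ∈ w, src β = a := by
  -- `200 = 5 * 40` affords a core of `40` letters; `40 > 3 * 12` leaves at most two exceptional
  -- sources, and for every other one at least `13 - 4 > 2 * 4` possible predecessors remain once
  -- the core letters whose sources the detour has already visited are removed.
  obtain ⟨E, hE, hinj, himage⟩ := exists_transversal v
  have hEcard : E.card = (srcs v).card := by rw [← himage, Finset.card_image_of_injOn hinj]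
  obtain ⟨S, hSE, hScard, hS⟩ := exists_pairwise_follows hinj (m := 40) (by lia)
  obtain ⟨D, hDv, hDcard, hD⟩ :=
    exists_pair_forall_lt_card (X := srcs v) (S := S) (k := 12) (by lia) (by lia)
  obtain ⟨segs, hsegs⟩ := hv.exists_isDetour hDv hDcard
  obtain ⟨w, hw, hperm⟩ := hsegs.exists_isAntiCycle hE hinj hSE hS (by lia) hD
  refine ⟨w, hw, ?_, fun a ha => ?_⟩
  · rw [Multiset.coe_eq_coe.2 hperm, ← Multiset.coe_add, Finset.coe_toList]
    exact coe_add_fresh_le hE hsegs.le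
  · simp only [hperm.mem_iff, List.mem_append, Finset.mem_toList, mem_fresh]
    obtain ⟨α, hα, rfl⟩ := Finset.mem_image.1 (himage ▸ ha)
    by_cases hαB : src α ∈ segs.flatten.map src
    · obtain ⟨β, hβ, hβα⟩ := List.mem_map.1 hαB
      exact ⟨β, Or.inl hβ, hβα⟩
    · exact ⟨α, Or.inr ⟨hα, hαB⟩, rfl⟩

lemma NonDeg.exists_isAntiCycle (hv : NonDeg v) (hcard : 200 ≤ (srcs v).card) :
    ∃ w, IsAntiCycle w ∧ (w : Multiset Letter) = Finsupp.toMultiset v := by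
  obtain ⟨u, hu, hle, hsrc⟩ := hv.exists_isAntiCycle_le hcard
  obtain ⟨w, hw, hweq⟩ := exists_isAntiCycle_add (Finsupp.toMultiset v - u) hu fun α hα =>
    hsrc (src α) (src_mem_srcs ((Finsupp.mem_toMultiset v α).1
      (Multiset.mem_of_le (Multiset.sub_le_self _ _) hα)))
  exact ⟨w, hw, hweq.trans (Multiset.sub_add_cancel hle)⟩

end Sufficiency

/-- For data vectors over Σ of sufficiently large order, being the Parikh image
of an anti-cycle is equivalent to non-degeneracy. -/
theorem anticycle_iff_nondeg :
    ∃ N : ℕ, ∀ v : Letter →₀ ℕ, N ≤ (srcs v).card →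
      ((∃ w : List Letter, IsAntiCycle w ∧ ∀ α : Letter, w.count α = v α) ↔
        NonDeg v) := by
  refine ⟨200, fun v hcard => ?_⟩
  simp only [← coe_eq_toMultiset_iff]
  constructor
  · rintro ⟨w, hw, hwv⟩
    exact hw.nonDeg hwv (by lia)
  · exact fun hv => hv.exists_isAntiCycle hcard
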